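/- The map f : 𝒳_Y^∧ → 𝒳̃_X defined by f(Γ) := Γ ∩ Cay(G,X) = (V(Γ), E(Γ) ∩ (G × X)) is a bijection and satisfies f((Γ₁ ∪ Γ₂)^∧) = f(Γ₁) ∪ f(Γ₂) for all Γ₁, Γ₂ ∈ 𝒳_Y^∧; that is, f is an isomorphism from the semilattice (𝒳_Y^∧, (Γ₁,Γ₂) ↦ (Γ₁ ∪ Γ₂)^∧) onto the semilattice (𝒳̃_X, ∪). -/

import Mathlib

/-!
A closed subgraph of `Cay(G,Y)` contains every possible `Ḡ`-labelled edge between its vertices, and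
incidence allows no others; it is therefore the closure of its part in `Cay(G,X)`, and `f` is
inverse to the closure of the inclusion. No connectedness is needed in `Cay(G,X)`, because the
closure joins the origin to every vertex by a single edge. Closure adds no `X`-labelled edge, so `f`
ignores it and turns the closure of a union into a union.
-/

namespace FInvPaper

/-- The extended alphabet `Y = X ⊔ Ḡ`, with `Ḡ` a bijective copy of `G`. -/
abbrev YT (X G : Type*) := X ⊕ G

/-- The extension `ι_Y : Y → G` of the assignment map `ι : X → G`. -/
def iotaY {X G : Type*} (ι : X → G) : YT X G → G := Sum.elim ι id

/-- A (candidate) subgraph of `Cay(G,Y)`: a set of vertices together with a set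
of positive edges, an edge `(a, y)` joining `a` to `a * ι_Y y`. -/
abbrev Graph (X G : Type*) := Set G × Set (G × YT X G)

variable {X G : Type*} [Group G]

/-- `Γ` is a finite subgraph of `Cay(G,Y)` containing the origin. -/
def IsSubgraph (ι : X → G) (Γ : Graph X G) : Prop :=
  Γ.1.Finite ∧ Γ.2.Finite ∧ (1 : G) ∈ Γ.1 ∧
    ∀ e ∈ Γ.2, e.1 ∈ Γ.1 ∧ e.1 * iotaY ι e.2 ∈ Γ.1

/-- The relation on vertices given by the positive edges of `Γ`. -/
def edgeRel (ι : X → G) (Γ : Graph X G) (a b : G) : Prop :=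
  ∃ y : YT X G, (a, y) ∈ Γ.2 ∧ b = a * iotaY ι y

/-- `Γ` is connected: every vertex is related to the origin `1` by the
equivalence relation generated by the edge relation. -/
def IsConn (ι : X → G) (Γ : Graph X G) : Prop :=
  ∀ v ∈ Γ.1, Relation.EqvGen (edgeRel ι Γ) 1 v

/-- `𝒳_Y`: all finite connected subgraphs of `Cay(G,Y)` containing the origin. -/
def XY (ι : X → G) : Set (Graph X G) :=
  {Γ | IsSubgraph ι Γ ∧ IsConn ι Γ}

/-- The translate `gΓ`. -/
def gmul (g : G) (Γ : Graph X G) : Graph X G :=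
  ((g * ·) '' Γ.1, (fun e => (g * e.1, e.2)) '' Γ.2)

/-- Componentwise union of graphs. -/
def gunion (Γ Δ : Graph X G) : Graph X G := (Γ.1 ∪ Δ.1, Γ.2 ∪ Δ.2)

/-- Componentwise inclusion of graphs. -/
def gsub (Γ Δ : Graph X G) : Prop := Γ.1 ⊆ Δ.1 ∧ Γ.2 ⊆ Δ.2

/-- The closure `Γ^∧` of `Γ`: add the edge `(a, \overline{a⁻¹b})` for all
vertices `a, b` of `Γ`. -/
def clo (Γ : Graph X G) : Graph X G :=
  (Γ.1, Γ.2 ∪ {e : G × YT X G | ∃ a ∈ Γ.1, ∃ b ∈ Γ.1, e = (a, Sum.inr (a⁻¹ * b))})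

/-- `Γ` is closed. -/
def IsClosedGr (Γ : Graph X G) : Prop :=
  ∀ a ∈ Γ.1, ∀ b ∈ Γ.1, (a, (Sum.inr (a⁻¹ * b) : YT X G)) ∈ Γ.2

/-- `𝒳_Y^∧`: all closed graphs in `𝒳_Y`. -/
def XYw (ι : X → G) : Set (Graph X G) := {Γ | Γ ∈ XY ι ∧ IsClosedGr Γ}

/-- The graph `Γ_1` with single vertex `1` and no edges. -/
def gammaOne : Graph X G := ({1}, ∅)

/-- The graph `Γ_x` for `x ∈ X`. -/
def gammaX (ι : X → G) (x : X) : Graph X G :=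
  ({1, ι x}, {((1 : G), (Sum.inl x : YT X G))})

/-- The graph `Γ_ḡ` for `g ∈ G`. -/
def gammaBar (g : G) : Graph X G :=
  ({1, g}, {((1 : G), (Sum.inr g : YT X G))})

/-- Raw elements: pairs `(Γ, g)`. -/
abbrev Elt (X G : Type*) := Graph X G × G

/-- The carrier of `M(G,Y)`. -/
def Mset (ι : X → G) : Set (Elt X G) := {p | p.1 ∈ XY ι ∧ p.2 ∈ p.1.1}

/-- Multiplication of `M(G,Y)`: `(A,g)(B,h) = (A ∪ gB, gh)`. -/
def mulM (p q : Elt X G) : Elt X G := (gunion p.1 (gmul p.2 q.1), p.2 * q.2)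

/-- Inversion: `(A,g)⁻¹ = (g⁻¹A, g⁻¹)`. -/
def invM (p : Elt X G) : Elt X G := (gmul p.2⁻¹ p.1, p.2⁻¹)

/-- The carrier of `M^∧(G,Y)`. -/
def Mwedge (ι : X → G) : Set (Elt X G) := {p | p.1 ∈ XYw ι ∧ p.2 ∈ p.1.1}

/-- Multiplication of `M^∧(G,Y)`: `(A,g)(B,h) = ((A ∪ gB)^∧, gh)`. -/
def mulW (p q : Elt X G) : Elt X G := (clo (gunion p.1 (gmul p.2 q.1)), p.2 * q.2)

/-- Natural partial order of `M^∧(G,Y)`: `s ≤ t` iff `s = s s⁻¹ t`. -/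
def nleW (p q : Elt X G) : Prop := p = mulW (mulW p (invM p)) q

/-- Minimum group congruence `σ` of `M^∧(G,Y)`. -/
def sigmaW (ι : X → G) (p q : Elt X G) : Prop :=
  ∃ u ∈ Mwedge ι, nleW u p ∧ nleW u q

/-- The `m`-operation of `M^∧(G,Y)`: `m(A, g) = (Γ_ḡ^∧, g)`. -/
def mW (p : Elt X G) : Elt X G := (clo (gammaBar p.2), p.2)

/-- Natural partial order of `M(G,Y)`. -/
def nleM (p q : Elt X G) : Prop := p = mulM (mulM p (invM p)) q

/-- Minimum group congruence `σ` of `M(G,Y)`. -/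
def sigmaM (ι : X → G) (p q : Elt X G) : Prop :=
  ∃ u ∈ Mset ι, nleM u p ∧ nleM u q

end FInvPaper
namespace FInvPaper

/-- A (candidate) subgraph of `Cay(G,X)`. -/
abbrev GraphX (X G : Type*) := Set G × Set (G × X)

variable {X G : Type*} [Group G]

/-- `Γ` is a finite subgraph of `Cay(G,X)` containing the origin. -/
def IsSubgraphX (ι : X → G) (Γ : GraphX X G) : Prop :=
  Γ.1.Finite ∧ Γ.2.Finite ∧ (1 : G) ∈ Γ.1 ∧
    ∀ e ∈ Γ.2, e.1 ∈ Γ.1 ∧ e.1 * ι e.2 ∈ Γ.1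

/-- The edge relation of a subgraph of `Cay(G,X)`. -/
def edgeRelX (ι : X → G) (Γ : GraphX X G) (a b : G) : Prop :=
  ∃ x : X, (a, x) ∈ Γ.2 ∧ b = a * ι x

/-- Connectedness of a subgraph of `Cay(G,X)`. -/
def IsConnX (ι : X → G) (Γ : GraphX X G) : Prop :=
  ∀ v ∈ Γ.1, Relation.EqvGen (edgeRelX ι Γ) 1 v

/-- `𝒳̃_X`: all finite (not necessarily connected) subgraphs of `Cay(G,X)`
containing the origin. -/
def tXX (ι : X → G) : Set (GraphX X G) := {Γ | IsSubgraphX ι Γ}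

/-- The translate `gΓ` for subgraphs of `Cay(G,X)`. -/
def gmulX (g : G) (Γ : GraphX X G) : GraphX X G :=
  ((g * ·) '' Γ.1, (fun e => (g * e.1, e.2)) '' Γ.2)

/-- Componentwise union. -/
def gunionX (Γ Δ : GraphX X G) : GraphX X G := (Γ.1 ∪ Δ.1, Γ.2 ∪ Δ.2)

/-- The carrier of `F(G,X)`. -/
def Fset (ι : X → G) : Set (GraphX X G × G) := {p | p.1 ∈ tXX ι ∧ p.2 ∈ p.1.1}

/-- Multiplication `(A,g)(B,h) = (A ∪ gB, gh)` (used both in `F(G,X)` and `M(G,X)`). -/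
def mulMX (p q : GraphX X G × G) : GraphX X G × G :=
  (gunionX p.1 (gmulX p.2 q.1), p.2 * q.2)

/-- Inversion `(A,g)⁻¹ = (g⁻¹A, g⁻¹)`. -/
def invMX (p : GraphX X G × G) : GraphX X G × G := (gmulX p.2⁻¹ p.1, p.2⁻¹)

/-- Erasing all edges with labels in `Ḡ`: the map `Γ ↦ Γ ∩ Cay(G,X)`. -/
def ff (Γ : Graph X G) : GraphX X G :=
  (Γ.1, {e : G × X | (e.1, (Sum.inl e.2 : YT X G)) ∈ Γ.2})

end FInvPaper

namespace FInvPaper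

section

variable {X G : Type*}

/-- The inclusion of `Cay(G,X)` in `Cay(G,Y)` on subgraphs, a right inverse of `ff`. -/
def inclX (Δ : GraphX X G) : Graph X G := (Δ.1, Prod.map id Sum.inl '' Δ.2)

theorem prodMap_id_inl_injective :
    Function.Injective (Prod.map id Sum.inl : G × X → G × YT X G) :=
  Function.injective_id.prodMap Sum.inl_injective

theorem ff_inclX (Δ : GraphX X G) : ff (inclX Δ) = Δ :=
  Prod.ext rfl (Set.preimage_image_eq Δ.2 prodMap_id_inl_injective)

theorem ff_gunion (Γ Δ : Graph X G) : ff (gunion Γ Δ) = gunionX (ff Γ) (ff Δ) :=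
  rfl

variable [Group G]

theorem ff_clo (Γ : Graph X G) : ff (clo Γ) = ff Γ := by
  refine Prod.ext rfl (Set.ext fun e => ?_)
  simp [ff, clo]

theorem isClosedGr_clo (Γ : Graph X G) : IsClosedGr (clo Γ) :=
  fun a ha b hb => Or.inr ⟨a, ha, b, hb, rfl⟩

variable {ι : X → G}

theorem isConn_of_isClosedGr {Γ : Graph X G} (h_one : 1 ∈ Γ.1) (hΓ : IsClosedGr Γ) :
    IsConn ι Γ :=
  fun v hv => .rel 1 v ⟨Sum.inr (1⁻¹ * v), hΓ 1 h_one v hv, (mul_inv_cancel_left 1 v).symm⟩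

theorem isSubgraph_clo {Γ : Graph X G} (hΓ : IsSubgraph ι Γ) : IsSubgraph ι (clo Γ) := by
  obtain ⟨hV, hE, h_one, h_inc⟩ := hΓ
  refine ⟨hV, hE.union ?_, h_one, ?_⟩
  · refine (hV.image2 (fun a b => (a, Sum.inr (a⁻¹ * b))) hV).subset ?_
    rintro _ ⟨a, ha, b, hb, rfl⟩
    exact Set.mem_image2_of_mem ha hb
  · rintro _ (he | ⟨a, ha, b, hb, rfl⟩)
    · exact h_inc _ he
    · exact ⟨ha, (mul_inv_cancel_left a b).symm ▸ hb⟩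

theorem clo_mem_XYw {Γ : Graph X G} (hΓ : IsSubgraph ι Γ) : clo Γ ∈ XYw ι :=
  have h_closed := isClosedGr_clo Γ
  ⟨⟨isSubgraph_clo hΓ, isConn_of_isClosedGr hΓ.2.2.1 h_closed⟩, h_closed⟩

theorem isSubgraph_inclX {Δ : GraphX X G} (hΔ : IsSubgraphX ι Δ) : IsSubgraph ι (inclX Δ) := by
  obtain ⟨hV, hE, h_one, h_inc⟩ := hΔ
  exact ⟨hV, hE.image _, h_one, Set.forall_mem_image.2 h_inc⟩

theorem isSubgraphX_ff {Γ : Graph X G} (hΓ : IsSubgraph ι Γ) : IsSubgraphX ι (ff Γ) := by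
  obtain ⟨hV, hE, h_one, h_inc⟩ := hΓ
  exact ⟨hV, hE.preimage prodMap_id_inl_injective.injOn, h_one, fun _ he => h_inc _ he⟩

theorem clo_inclX_ff {Γ : Graph X G} (h_inc : ∀ e ∈ Γ.2, e.1 ∈ Γ.1 ∧ e.1 * iotaY ι e.2 ∈ Γ.1)
    (hΓ : IsClosedGr Γ) : clo (inclX (ff Γ)) = Γ := by
  refine Prod.ext rfl (Set.Subset.antisymm ?_ ?_)
  · rintro _ (⟨_, he, rfl⟩ | ⟨a, ha, b, hb, rfl⟩)
    · exact he
    · exact hΓ a ha b hb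
  · rintro ⟨a, x | g⟩ he
    · exact Or.inl ⟨(a, x), he, rfl⟩
    · obtain ⟨ha, hag⟩ := h_inc _ he
      exact Or.inr ⟨a, ha, a * g, hag, by rw [inv_mul_cancel_left]⟩

theorem ff_bijOn : Set.BijOn ff (XYw ι) (tXX ι) := by
  have h_inv : Set.InvOn (fun Δ => clo (inclX Δ)) ff (XYw ι) (tXX ι) :=
    ⟨fun _ ⟨⟨⟨_, _, _, h_inc⟩, _⟩, h_closed⟩ => clo_inclX_ff h_inc h_closed,
      fun Δ _ => (ff_clo _).trans (ff_inclX Δ)⟩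
  exact h_inv.bijOn (fun _ hΓ => isSubgraphX_ff hΓ.1.1)
    fun _ hΔ => clo_mem_XYw (isSubgraph_inclX hΔ)

theorem ff_clo_gunion (Γ Δ : Graph X G) :
    ff (clo (gunion Γ Δ)) = gunionX (ff Γ) (ff Δ) :=
  (ff_clo _).trans (ff_gunion Γ Δ)

theorem ff_semilattice_iso_general (ι : X → G) :
    Set.BijOn ff (XYw ι) (tXX ι) ∧
      ∀ Γ₁ Γ₂ : Graph X G, ff (clo (gunion Γ₁ Γ₂)) = gunionX (ff Γ₁) (ff Γ₂) :=
  ⟨ff_bijOn, ff_clo_gunion⟩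

end

/-- The map `f : 𝒳_Y^∧ → 𝒳̃_X`,
`f(Γ) = Γ ∩ Cay(G,X) = (V(Γ), E(Γ) ∩ (G × X))`, is a bijection and satisfies
`f((Γ₁ ∪ Γ₂)^∧) = f(Γ₁) ∪ f(Γ₂)`; that is, it is an isomorphism of semilattices
`(𝒳_Y^∧, (Γ₁,Γ₂) ↦ (Γ₁ ∪ Γ₂)^∧) → (𝒳̃_X, ∪)`. -/
theorem ff_semilattice_iso {X G : Type*} [Nonempty X] [Group G] (ι : X → G)
    (hgen : Subgroup.closure (Set.range ι) = ⊤) :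
    -- `f` maps `𝒳_Y^∧` into `𝒳̃_X`
    (∀ Γ ∈ XYw ι, ff Γ ∈ tXX ι) ∧
    -- `f` is injective on `𝒳_Y^∧`
    (∀ Γ ∈ XYw ι, ∀ Δ ∈ XYw ι, ff Γ = ff Δ → Γ = Δ) ∧
    -- `f` is surjective onto `𝒳̃_X`
    (∀ Δ ∈ tXX ι, ∃ Γ ∈ XYw ι, ff Γ = Δ) ∧
    -- `f` transforms the meet of `𝒳_Y^∧` into union
    (∀ Γ₁ ∈ XYw ι, ∀ Γ₂ ∈ XYw ι,
      ff (clo (gunion Γ₁ Γ₂)) = gunionX (ff Γ₁) (ff Γ₂)) := by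
  obtain ⟨⟨h_maps, h_inj, h_surj⟩, h_union⟩ := ff_semilattice_iso_general ι
  exact ⟨h_maps, fun _ hΓ _ hΔ h => h_inj hΓ hΔ h, h_surj, fun Γ₁ _ Γ₂ _ => h_union Γ₁ Γ₂⟩

end FInvPaper
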